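/- Let n ≥ 5. Then the center of the quotient group Ā = A[B_n]/Z(A[B_n]) is trivial. -/

import Mathlib

/-- The defining relators of the Artin group of type `Bₙ`, as elements of the free
group on `n` generators (0-indexed: generator `i` corresponds to `r_{i+1}`). -/
def BnRels (n : ℕ) : Set (FreeGroup (Fin n)) :=
  {w | (∃ i j : Fin n, (i : ℕ) + 1 = (j : ℕ) ∧ (j : ℕ) + 1 < n ∧
          w = FreeGroup.of i * FreeGroup.of j * FreeGroup.of i *
              (FreeGroup.of j * FreeGroup.of i * FreeGroup.of j)⁻¹) ∨
       (∃ i j : Fin n, (i : ℕ) + 2 = n ∧ (j : ℕ) + 1 = n ∧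
          w = FreeGroup.of i * FreeGroup.of j * FreeGroup.of i * FreeGroup.of j *
              (FreeGroup.of j * FreeGroup.of i * FreeGroup.of j * FreeGroup.of i)⁻¹) ∨
       (∃ i j : Fin n, (i : ℕ) + 2 ≤ (j : ℕ) ∧
          w = FreeGroup.of i * FreeGroup.of j * (FreeGroup.of j * FreeGroup.of i)⁻¹)}

/-- The Artin group `A[Bₙ]` of type `Bₙ`. -/
abbrev ArtinB (n : ℕ) := PresentedGroup (BnRels n)

/-- The standard generator `r_i` (1-indexed, `1 ≤ i ≤ n`). -/
def rB (n i : ℕ) : ArtinB n :=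
  if h : i - 1 < n then PresentedGroup.of ⟨i - 1, h⟩ else 1

/-- `ρ_B = r_1 r_2 ⋯ r_n`. -/
def ρB (n : ℕ) : ArtinB n := ((List.range n).map fun i => rB n (i + 1)).prod

/-- `Δ_B = ρ_B ^ n`, the generator of the center. -/
def ΔB (n : ℕ) : ArtinB n := ρB n ^ n

/-- `t_i` for `i` read modulo `n`: `t_i = r_i` for `1 ≤ i ≤ n-1`,
and `t_0 = ρ_B r_{n-1} ρ_B⁻¹`. -/
def tB (n i : ℕ) : ArtinB n :=
  if i % n = 0 then ρB n * rB n (n - 1) * (ρB n)⁻¹ else rB n (i % n)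

/-- `Δ_Y = (t_1⋯t_{n-1})(t_1⋯t_{n-2})⋯(t_1t_2)t_1`, the Garside element of the
parabolic subgroup of type `A_{n-1}`. -/
def ΔY (n : ℕ) : ArtinB n :=
  ((List.range (n - 1)).map fun k =>
    ((List.range (n - 1 - k)).map fun i => rB n (i + 1)).prod).prod

/-- `ρ_0 = t_1 t_2 ⋯ t_{n-1}`. -/
def ρ₀B (n : ℕ) : ArtinB n := ((List.range (n - 1)).map fun i => rB n (i + 1)).prod

/-- `ρ_1 = t_1⁻¹ t_2⁻¹ ⋯ t_{n-1}⁻¹`. -/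
def ρ₁B (n : ℕ) : ArtinB n := ((List.range (n - 1)).map fun i => (rB n (i + 1))⁻¹).prod

/-- `ρ_k` for `k ∈ {0,1}`. -/
def ρkB (n k : ℕ) : ArtinB n := if k = 0 then ρ₀B n else ρ₁B n

/-- `v_k = ρ_k t_{n-1} ρ_k⁻¹` for `k ∈ {0,1}`. -/
def vB (n k : ℕ) : ArtinB n := ρkB n k * rB n (n - 1) * (ρkB n k)⁻¹

/-- `δ = r_{n-1} r_{n-2} ⋯ r_2 r_1² r_2 ⋯ r_{n-2} r_{n-1}`. -/
def δB (n : ℕ) : ArtinB n :=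
  ((List.range (n - 2)).map fun i => rB n (n - 1 - i)).prod * rB n 1 ^ 2 *
  ((List.range (n - 2)).map fun i => rB n (i + 2)).prod

/-- The quotient `Ā = A[Bₙ]/Z(A[Bₙ])`. -/
abbrev AbarB (n : ℕ) := ArtinB n ⧸ Subgroup.center (ArtinB n)

/-- The canonical projection `π : A[Bₙ] → Ā`. -/
def πB (n : ℕ) : ArtinB n →* AbarB n := QuotientGroup.mk' (Subgroup.center (ArtinB n))

/-- `t̄_i = π(t_i)`. -/
def tbar (n i : ℕ) : AbarB n := πB n (tB n i)

/-- `ρ̄_B = π(ρ_B)`. -/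
def ρbar (n : ℕ) : AbarB n := πB n (ρB n)

/-- The composition `conj_x ∘ φ` of an endomorphism with an inner automorphism. -/
def conjComp {G : Type*} [Group G] (x : G) (φ : G →* G) : G →* G :=
  (MulAut.conj x).toMonoidHom.comp φ

/-- Type (1): there are commuting `g, h` with `φ(t_i) = g` for all `0 ≤ i ≤ n-1`
and `φ(ρ_B) = h`. -/
def IsType1 (n : ℕ) (φ : ArtinB n →* ArtinB n) : Prop :=
  ∃ g h : ArtinB n, g * h = h * g ∧ (∀ i < n, φ (tB n i) = g) ∧ φ (ρB n) = h

/-- Type (2a) with parameters `ε ∈ {1,-1}`, `p q : ℤ`. -/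
def IsType2a (n : ℕ) (ε p q : ℤ) (φ : ArtinB n →* ArtinB n) : Prop :=
  (ε = 1 ∨ ε = -1) ∧ (∀ i < n, φ (tB n i) = tB n i ^ ε * ΔB n ^ p) ∧
    φ (ρB n) = ρB n * ΔB n ^ q

/-- Type (2b) with parameters `ε ∈ {1,-1}`, `p q : ℤ`. -/
def IsType2b (n : ℕ) (ε p q : ℤ) (φ : ArtinB n →* ArtinB n) : Prop :=
  (ε = 1 ∨ ε = -1) ∧ (∀ i < n, φ (tB n i) = tB n (n - i) ^ ε * ΔB n ^ p) ∧
    φ (ρB n) = (ρB n)⁻¹ * ΔB n ^ q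

/-- Type (3) with parameters `ε ∈ {1,-1}`, `k ∈ {0,1}`, `p q r s : ℤ`. -/
def IsType3 (n : ℕ) (ε : ℤ) (k : ℕ) (p q r s : ℤ) (φ : ArtinB n →* ArtinB n) : Prop :=
  (ε = 1 ∨ ε = -1) ∧ (k = 0 ∨ k = 1) ∧
    (∀ i, 1 ≤ i → i ≤ n - 1 → φ (tB n i) = tB n i ^ ε * ΔY n ^ (2 * p) * ΔB n ^ q) ∧
    φ (tB n 0) = vB n k ^ ε * ΔY n ^ (2 * p) * ΔB n ^ q ∧
    φ (ρB n) = ρkB n k * ΔY n ^ (2 * r) * ΔB n ^ s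

/-!
Say that the center of a group `G` is detected by `ℤ` if only the identity is a central element
killed by every morphism `G → ℤ`. Then `G / Z(G)` has trivial center: if the class of `g` is
central, each commutator `⁅g, h⁆` is central in `G` and is killed by every morphism to `ℤ`, hence
is trivial.

Detection is obtained by induction, viewing `A[A_n]` as the braid group on `n + 1` strands and
`A[B_{n+1}]` as the group of braids on `n + 1` strands around a fixed axis. Forgetting the axis is
a surjection `A[B_{n+1}] → A[A_n]` whose kernel is free of rank `n + 1`, so for `n ≥ 1` it
contains no nontrivial central element, and detection lifts from `A[A_n]` to `A[B_{n+1}]`. Taking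
the last strand as the axis identifies `A[B_{n+1}]` with a subgroup of finite index of
`A[A_{n+1}]` that contains the center, and the transfer carries detection from a finite-index
subgroup to the whole group. The freeness and the embedding are proved by letting the groups act:
on a free group by left translations and half twists, and on the pairs of a position of the axis
and an element of `A[B_{n+1}]`.
-/

section DetectedCenter

variable {G K : Type*} [Group G] [Group K]

/-- The center of `G` is detected by `ℤ` if only the identity is a central element killed by every
morphism `G → ℤ`. -/
def CenterDetectedByInt (G : Type*) [Group G] : Prop :=
  ∀ z ∈ Subgroup.center G, (∀ f : G →* Multiplicative ℤ, f z = 1) → z = 1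

open scoped commutatorElement in
theorem CenterDetectedByInt.center_quotient_center_eq_bot (hG : CenterDetectedByInt G) :
    Subgroup.center (G ⧸ Subgroup.center G) = ⊥ := by
  rw [eq_bot_iff]
  intro y hy
  obtain ⟨g, rfl⟩ := QuotientGroup.mk_surjective y
  rw [Subgroup.mem_bot, QuotientGroup.eq_one_iff, Subgroup.mem_center_iff]
  intro h
  have hcentral : ⁅g, h⁆ ∈ Subgroup.center G := by
    rw [← QuotientGroup.eq_one_iff, ← QuotientGroup.mk'_apply, map_commutatorElement,
      commutatorElement_eq_one_iff_mul_comm]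
    exact (Subgroup.mem_center_iff.1 hy _).symm
  have hkilled (f : G →* Multiplicative ℤ) : f ⁅g, h⁆ = 1 := by
    rw [map_commutatorElement, commutatorElement_eq_one_iff_mul_comm, mul_comm]
  exact (commutatorElement_eq_one_iff_mul_comm.1 (hG _ hcentral hkilled)).symm

theorem CenterDetectedByInt.of_injective_int {f : G →* Multiplicative ℤ}
    (hf : Function.Injective f) : CenterDetectedByInt G :=
  fun _ _ hz => (map_eq_one_iff f hf).1 (hz f)

theorem CenterDetectedByInt.of_surjective (hK : CenterDetectedByInt K) {f : G →* K}
    (hf : Function.Surjective f) (hker : Disjoint f.ker (Subgroup.center G)) :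
    CenterDetectedByInt G := by
  intro z hz hkilled
  have hfz : f z ∈ Subgroup.center K := by
    refine Subgroup.mem_center_iff.2 fun k => ?_
    obtain ⟨g, rfl⟩ := hf k
    rw [← map_mul, ← map_mul, Subgroup.mem_center_iff.1 hz]
  exact Subgroup.disjoint_def.1 hker (hK _ hfz fun φ => hkilled (φ.comp f)) hz

/-- The transfer of `φ : H → ℤ` takes the value `φ z ^ [G : H]` at a central element `z`. -/
theorem CenterDetectedByInt.of_finiteIndex {H : Subgroup G} [H.FiniteIndex]
    (hH : CenterDetectedByInt H) (hle : Subgroup.center G ≤ H) : CenterDetectedByInt G := by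
  intro z hz hkilled
  have hzH : (⟨z, hle hz⟩ : H) ∈ Subgroup.center H :=
    Subgroup.mem_center_iff.2 fun h => Subtype.ext (Subgroup.mem_center_iff.1 hz h)
  refine congrArg Subtype.val (hH _ hzH fun φ => ?_)
  have htransfer : φ.transfer z = φ ⟨z, hle hz⟩ ^ H.index := by
    rw [φ.transfer_eq_pow z fun k g _ => ?_, ← map_pow]
    · rfl
    · rw [mul_assoc, ← Subgroup.mem_center_iff.1 (pow_mem hz k), inv_mul_cancel_left]
  rw [hkilled, eq_comm] at htransfer
  exact (pow_eq_one_iff_left Subgroup.FiniteIndex.index_ne_zero).1 htransfer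

end DetectedCenter

section ArtinSequences

variable {G K : Type*} [Group G] [Group K] {s : ℕ → G} {n i j k m : ℕ}

/-- The product `s_i s_{i+1} ⋯ s_{m-1}` in this order. -/
def prodIco (s : ℕ → G) (i m : ℕ) : G := ((List.Ico i m).map s).prod

theorem prodIco_self (s : ℕ → G) (m : ℕ) : prodIco s m m = 1 := by
  simp [prodIco]

theorem prodIco_eq_mul (h : i < m) : prodIco s i m = s i * prodIco s (i + 1) m := by
  simp [prodIco, List.Ico.eq_cons h]

theorem prodIco_succ (h : i ≤ m) : prodIco s i (m + 1) = prodIco s i m * s m := by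
  simp [prodIco, List.Ico.succ_top h]

theorem prodIco_congr {t : ℕ → G} (h : ∀ k < m, s k = t k) : prodIco s i m = prodIco t i m :=
  congrArg List.prod (List.map_congr_left fun k hk => h k (List.Ico.mem.1 hk).2)

theorem map_prodIco (f : G →* K) (s : ℕ → G) (i m : ℕ) :
    f (prodIco s i m) = prodIco (fun k => f (s k)) i m := by
  simp [prodIco, map_list_prod, Function.comp_def]

theorem commute_prodIco {g : G} (h : ∀ k, i ≤ k → k < m → Commute g (s k)) :
    Commute g (prodIco s i m) := by
  refine Commute.list_prod_right _ _ fun x hx => ?_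
  obtain ⟨k, hk, rfl⟩ := List.mem_map.1 hx
  exact h k (List.Ico.mem.1 hk).1 (List.Ico.mem.1 hk).2

/-- The first `n` terms `s_0, …, s_{n-1}` satisfy the Artin relations of type `A_n`, that is, the
relations of the braid group on `n + 1` strands. -/
structure IsTypeA (n : ℕ) (s : ℕ → G) : Prop where
  braid : ∀ i, i + 1 < n → s i * s (i + 1) * s i = s (i + 1) * s i * s (i + 1)
  commute : ∀ i j, i + 2 ≤ j → j < n → Commute (s i) (s j)

/-- The first `n + 1` terms `s_0, …, s_n` satisfy the Artin relations of type `B_{n+1}`. -/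
structure IsTypeB (n : ℕ) (s : ℕ → G) : Prop extends IsTypeA n s where
  four : ∀ i, i + 1 = n → s i * s n * s i * s n = s n * s i * s n * s i
  commute_last : ∀ i, i + 1 < n → Commute (s i) (s n)

namespace IsTypeA

theorem commute_prodIco_of_lt (hs : IsTypeA n s) (hji : j + 1 < i) (hm : m ≤ n) :
    Commute (s j) (prodIco s i m) :=
  commute_prodIco fun k hk hkm => hs.commute j k (by lia) (by lia)

theorem succ_mul_prodIco (hs : IsTypeA n s) (hij : i ≤ j) (hjm : j + 1 < m) (hm : m ≤ n) :
    s (j + 1) * prodIco s i m = prodIco s i m * s j := by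
  induction hij using Nat.decreasingInduction with
  | self =>
    have hcomm : Commute (s j) (prodIco s (j + 1 + 1) m) := hs.commute_prodIco_of_lt (by lia) hm
    rw [prodIco_eq_mul (by lia), prodIco_eq_mul hjm, ← mul_assoc, ← mul_assoc,
      ← hs.braid j (by lia), mul_assoc _ (s j), hcomm.eq]
    simp only [mul_assoc]
  | of_succ i hij ih =>
    have hcomm : Commute (s i) (s (j + 1)) := hs.commute _ _ (by lia) (by lia)
    rw [prodIco_eq_mul (by lia), ← mul_assoc, ← hcomm.eq, mul_assoc, ih, mul_assoc]

theorem prodIco_succ_mul_prodIco (hs : IsTypeA n s) (hik : i ≤ k) (hkm : k ≤ m) (hm : m < n) :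
    prodIco s (k + 1) (m + 1) * prodIco s i (m + 1) = prodIco s i (m + 1) * prodIco s k m := by
  induction hkm using Nat.decreasingInduction with
  | self => simp [prodIco_self]
  | of_succ k hkm ih =>
    rw [prodIco_eq_mul (i := k + 1) (by lia), prodIco_eq_mul hkm, mul_assoc, ih (by lia),
      ← mul_assoc, hs.succ_mul_prodIco hik (by lia) hm, mul_assoc]

theorem mono (hs : IsTypeA n s) (hmn : m ≤ n) : IsTypeA m s where
  braid i hi := hs.braid i (by lia)
  commute i j hij hj := hs.commute i j hij (by lia)

theorem map (hs : IsTypeA n s) (f : G →* K) : IsTypeA n fun i => f (s i) where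
  braid i hi := by simp only [← map_mul, hs.braid i hi]
  commute i j hij hj := (hs.commute i j hij hj).map f

theorem isTypeB_update (hs : IsTypeA n s) {g : G}
    (hfour : ∀ i, i + 1 = n → s i * g * s i * g = g * s i * g * s i)
    (hcomm : ∀ i, i + 1 < n → Commute (s i) g) : IsTypeB n (Function.update s n g) where
  braid i hi := by
    simpa [(by lia : i ≠ n), (by lia : i + 1 ≠ n)] using hs.braid i hi
  commute i j hij hj := by
    simpa [(by lia : i ≠ n), (by lia : j ≠ n)] using hs.commute i j hij hj
  four i hi := by
    simpa [(by lia : i ≠ n)] using hfour i hi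
  commute_last i hi := by
    simpa [(by lia : i ≠ n)] using hcomm i hi

/-- The braid group of a disc with a distinguished strand: a strand crosses the distinguished one
only through full twists. -/
theorem isTypeB_update_sq (hs : IsTypeA (n + 1) s) :
    IsTypeB n (Function.update s n (s n ^ 2)) := by
  refine (hs.mono n.le_succ).isTypeB_update (fun i hi => ?_)
    fun i hi => (hs.commute i n hi n.lt_succ_self).pow_right 2
  have hbraid := hs.braid i (by lia)
  rw [hi] at hbraid
  generalize s i = a at hbraid ⊢
  generalize s n = b at hbraid ⊢
  simp only [pow_two]
  calc a * (b * b) * a * (b * b) = a * b * (b * a * b) * b := by group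
    _ = a * b * (a * b * a) * b := by rw [hbraid]
    _ = (a * b * a) * (b * a * b) := by group
    _ = (b * a * b) * (a * b * a) := by rw [hbraid]
    _ = b * (a * b * a) * b * a := by group
    _ = b * (b * a * b) * b * a := by rw [hbraid]
    _ = b * b * a * (b * b) * a := by group

end IsTypeA

/-- The conjugate of `s_n` by `s_i ⋯ s_{n-1}`. When `s` is the standard sequence of generators of
type `B_{n+1}`, seen as braids with a fixed axis, this is the loop of the strand `i` around the
axis. -/
def loop (n : ℕ) (s : ℕ → G) (i : ℕ) : G := prodIco s i n * s n * (prodIco s i n)⁻¹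

theorem loop_self (n : ℕ) (s : ℕ → G) : loop n s n = s n := by
  simp [loop, prodIco_self]

theorem loop_eq_conj (h : i < n) : loop n s i = s i * loop n s (i + 1) * (s i)⁻¹ := by
  rw [loop, prodIco_eq_mul h, loop]
  group

theorem mul_loop_succ (h : i < n) : s i * loop n s (i + 1) = loop n s i * s i := by
  rw [loop_eq_conj h, inv_mul_cancel_right]

theorem map_loop (f : G →* K) (n : ℕ) (s : ℕ → G) (i : ℕ) :
    f (loop n s i) = loop n (fun k => f (s k)) i := by
  simp [loop, map_prodIco]

theorem loop_congr {t : ℕ → G} (h : ∀ k ≤ n, s k = t k) : loop n s i = loop n t i := by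
  rw [loop, loop, prodIco_congr fun k hk => h k hk.le, h n le_rfl]

theorem IsTypeA.prodIco_succ_mul_loop_update_sq (hs : IsTypeA (n + 1) s) (hi : i ≤ n) :
    prodIco s (i + 1) (n + 1) * loop n (Function.update s n (s n ^ 2)) i =
      s i * prodIco s i (n + 1) := by
  have hprod : prodIco (Function.update s n (s n ^ 2)) i n = prodIco s i n :=
    prodIco_congr fun k hk => Function.update_of_ne hk.ne _ _
  have hshift := hs.prodIco_succ_mul_prodIco le_rfl hi (Nat.lt_succ_self n)
  rw [loop, hprod, Function.update_self, ← mul_assoc, mul_inv_eq_iff_eq_mul]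
  calc prodIco s (i + 1) (n + 1) * (prodIco s i n * s n ^ 2)
      = prodIco s (i + 1) (n + 1) * (prodIco s i n * s n) * s n := by simp only [pow_two, mul_assoc]
    _ = prodIco s i (n + 1) * prodIco s i (n + 1) := by
        rw [← prodIco_succ hi, hshift, mul_assoc, ← prodIco_succ hi]
    _ = s i * (prodIco s (i + 1) (n + 1) * prodIco s i (n + 1)) := by
        rw [← mul_assoc, ← prodIco_eq_mul (by lia)]
    _ = s i * prodIco s i (n + 1) * prodIco s i n := by rw [hshift, mul_assoc]

namespace IsTypeB

theorem commute_loop_of_lt (hs : IsTypeB n s) (hji : j + 1 < i) (hi : i ≤ n) :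
    Commute (s j) (loop n s i) := by
  have hprod := hs.commute_prodIco_of_lt hji le_rfl
  exact (hprod.mul_right (hs.commute_last j (by lia))).mul_right hprod.inv_right

theorem commute_loop_of_gt (hs : IsTypeB n s) (hij : i < j) (hj : j < n) :
    Commute (s j) (loop n s i) := by
  obtain ⟨j, rfl⟩ : ∃ k, j = k + 1 := ⟨j - 1, by lia⟩
  have hconj : s (j + 1) = prodIco s i n * s j * (prodIco s i n)⁻¹ := by
    rw [← hs.succ_mul_prodIco (by lia) hj le_rfl, mul_inv_cancel_right]
  rw [hconj, loop]
  exact (Commute.conj_iff _).2 (hs.commute_last j hj)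

theorem commute_loop (hs : IsTypeB n s) (hi : i ≤ n) (hj : j < n) (hij : i ≠ j)
    (hij' : i ≠ j + 1) : Commute (s j) (loop n s i) := by
  obtain h | h := lt_or_gt_of_ne hij
  · exact hs.commute_loop_of_gt h hj
  · exact hs.commute_loop_of_lt (by lia) hi

theorem commute_loop_succ_mul_loop (hs : IsTypeB n s) (hj : j < n) :
    Commute (s j) (loop n s (j + 1) * loop n s j) := by
  obtain ⟨n, rfl⟩ : ∃ k, n = k + 1 := ⟨n - 1, by lia⟩
  induction Nat.le_of_lt_succ hj using Nat.decreasingInduction with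
  | self =>
    have hcomm : Commute (s n) (s (n + 1) * s n * s (n + 1)) := by
      simpa only [commute_iff_eq, mul_assoc] using hs.four n rfl
    rw [loop_eq_conj hj, loop_self, ← mul_assoc, ← mul_assoc]
    exact hcomm.mul_right (Commute.refl _).inv_right
  | of_succ j hjn ih =>
    have hs₁ : (s (j + 1) * s j) * s (j + 1) * (s (j + 1) * s j)⁻¹ = s j := by
      rw [← hs.braid j (by lia)]
      group
    have hloop₂ : (s (j + 1) * s j) * loop (n + 1) s (j + 1 + 1) * (s (j + 1) * s j)⁻¹ =
        loop (n + 1) s (j + 1) := by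
      rw [loop_eq_conj (i := j + 1) (by lia), mul_assoc (s (j + 1)),
        (hs.commute_loop_of_lt (by lia) (by lia) : Commute (s j) (loop (n + 1) s (j + 1 + 1))).eq]
      group
    have hloop₁ : (s (j + 1) * s j) * loop (n + 1) s (j + 1) * (s (j + 1) * s j)⁻¹ =
        loop (n + 1) s j := by
      rw [mul_assoc (s (j + 1)), mul_loop_succ hj, ← mul_assoc,
        (hs.commute_loop_of_gt (by lia) (by lia) : Commute (s (j + 1)) (loop (n + 1) s j)).eq]
      group
    have hconj := (Commute.conj_iff (s (j + 1) * s j)).2 (ih (by lia))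
    rwa [← conj_mul, hs₁, hloop₂, hloop₁] at hconj

theorem mul_loop (hs : IsTypeB n s) (hj : j < n) :
    s j * loop n s j = (loop n s j)⁻¹ * loop n s (j + 1) * loop n s j * s j := by
  have h := (hs.commute_loop_succ_mul_loop hj).eq
  rw [← mul_assoc, mul_loop_succ hj, mul_assoc] at h
  rw [mul_assoc, mul_assoc, eq_inv_mul_iff_mul_eq, h, mul_assoc]

end IsTypeB

end ArtinSequences

section FreeGroupCentralizer

variable {α : Type*} {w : FreeGroup α} {a b : α}

theorem fst_getLast_toWord_eq_of_commute_of [DecidableEq α] (h : Commute w (FreeGroup.of a))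
    (hw : w.toWord ≠ []) : (w.toWord.getLast hw).1 = a := by
  by_contra hne
  have hred : FreeGroup.IsReduced (w.toWord ++ [(a, true)]) := by
    refine List.IsChain.append FreeGroup.isReduced_toWord (List.isChain_singleton _) ?_
    intro x hx y hy hxy
    rw [List.getLast?_eq_some_getLast hw] at hx
    simp only [Option.mem_def, Option.some.injEq, List.head?_cons] at hx hy
    subst hx hy
    exact absurd hxy hne
  have hright : (w * FreeGroup.of a).toWord = w.toWord ++ [(a, true)] := by
    rw [FreeGroup.toWord_mul, FreeGroup.toWord_of, hred.reduce_eq]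
  have hleft : (FreeGroup.of a * w).toWord.Sublist ((a, true) :: w.toWord) := by
    simpa using FreeGroup.toWord_mul_sublist (FreeGroup.of a) w
  rw [← h.eq, hright] at hleft
  have hlast := List.getLast_congr (by simp) (by simp) (hleft.eq_of_length (by simp))
  rw [List.getLast_append_singleton, List.getLast_cons hw] at hlast
  exact hne (by rw [← hlast])

theorem eq_one_of_commute_of_of (hab : a ≠ b) (ha : Commute w (FreeGroup.of a))
    (hb : Commute w (FreeGroup.of b)) : w = 1 := by
  classical
  by_contra hw
  have hword : w.toWord ≠ [] := mt FreeGroup.toWord_eq_nil_iff.1 hw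
  exact hab ((fst_getLast_toWord_eq_of_commute_of ha hword).symm.trans
    (fst_getLast_toWord_eq_of_commute_of hb hword))

end FreeGroupCentralizer

/-- The defining relators of the Artin group of type `A_n`, with the generators indexed from `0`. -/
def AnRels (n : ℕ) : Set (FreeGroup (Fin n)) :=
  {w | (∃ i j : Fin n, (i : ℕ) + 1 = j ∧
          w = FreeGroup.of i * FreeGroup.of j * FreeGroup.of i *
              (FreeGroup.of j * FreeGroup.of i * FreeGroup.of j)⁻¹) ∨
       (∃ i j : Fin n, (i : ℕ) + 2 ≤ j ∧
          w = FreeGroup.of i * FreeGroup.of j * (FreeGroup.of j * FreeGroup.of i)⁻¹)}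

/-- The Artin group of type `A_n`, that is, the braid group on `n + 1` strands. -/
abbrev ArtinA (n : ℕ) := PresentedGroup (AnRels n)

namespace ArtinA

variable {G : Type*} [Group G] {s : ℕ → G} {n i : ℕ}

/-- The standard generators `σ_0, …, σ_{n-1}` of `A[A_n]`, followed by `1`s. -/
def σ (n i : ℕ) : ArtinA n := if h : i < n then PresentedGroup.of ⟨i, h⟩ else 1

theorem σ_of_lt (h : i < n) : σ n i = PresentedGroup.of ⟨i, h⟩ := dif_pos h

theorem isTypeA_σ (n : ℕ) : IsTypeA n (σ n) where
  braid i hi := by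
    rw [σ_of_lt hi, σ_of_lt (by lia : i < n)]
    exact PresentedGroup.mk_eq_mk_of_mul_inv_mem (Or.inl ⟨_, _, rfl, rfl⟩)
  commute i j hij hj := by
    rw [σ_of_lt hj, σ_of_lt (by lia : i < n)]
    exact PresentedGroup.mk_eq_mk_of_mul_inv_mem (Or.inr ⟨_, _, hij, rfl⟩)

/-- The morphism from `A[A_n]` given by a sequence satisfying the relations of type `A_n`. -/
def lift (hs : IsTypeA n s) : ArtinA n →* G :=
  PresentedGroup.toGroup (f := fun i : Fin n => s i) (by
    rintro r (⟨i, j, hij, rfl⟩ | ⟨i, j, hij, rfl⟩) <;>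
      simp only [map_mul, map_inv, FreeGroup.lift_apply_of, mul_inv_eq_one]
    · rw [← hij, hs.braid i (by lia)]
    · exact hs.commute i j hij j.2)

theorem lift_σ (hs : IsTypeA n s) (hi : i < n) : lift hs (σ n i) = s i := by
  simp [lift, σ_of_lt hi]

theorem closure_σ (n : ℕ) : Subgroup.closure (σ n '' Set.Iio n) = ⊤ := by
  rw [← PresentedGroup.closure_range_of]
  congr 1
  ext z
  constructor
  · rintro ⟨i, hi, rfl⟩
    exact ⟨⟨i, hi⟩, (σ_of_lt hi).symm⟩
  · rintro ⟨i, rfl⟩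
    exact ⟨i, i.2, σ_of_lt i.2⟩

end ArtinA

namespace ArtinB

variable {G : Type*} [Group G] {s : ℕ → G} {n i : ℕ}

/-- The standard generators `r_1, …, r_{n+1}` of `A[B_{n+1}]`, indexed from `0`. -/
def gen (n i : ℕ) : ArtinB (n + 1) := rB (n + 1) (i + 1)

theorem gen_of_le (h : i ≤ n) : gen n i = PresentedGroup.of ⟨i, Nat.lt_succ_of_le h⟩ :=
  dif_pos _

theorem isTypeB_gen (n : ℕ) : IsTypeB n (gen n) where
  braid i hi := by
    rw [gen_of_le hi.le, gen_of_le (by lia : i ≤ n)]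
    exact PresentedGroup.mk_eq_mk_of_mul_inv_mem (Or.inl ⟨_, _, rfl, by simpa using hi, rfl⟩)
  commute i j hij hj := by
    rw [gen_of_le hj.le, gen_of_le (by lia : i ≤ n)]
    exact PresentedGroup.mk_eq_mk_of_mul_inv_mem (Or.inr (Or.inr ⟨_, _, hij, rfl⟩))
  four i hi := by
    rw [gen_of_le le_rfl, gen_of_le (by lia : i ≤ n)]
    exact PresentedGroup.mk_eq_mk_of_mul_inv_mem
      (Or.inr (Or.inl ⟨_, _, by simpa using hi, rfl, rfl⟩))
  commute_last i hi := by
    rw [gen_of_le le_rfl, gen_of_le (by lia : i ≤ n)]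
    exact PresentedGroup.mk_eq_mk_of_mul_inv_mem
      (Or.inr (Or.inr ⟨⟨i, by lia⟩, ⟨n, by lia⟩, hi, rfl⟩))

/-- The morphism from `A[B_{n+1}]` given by a sequence satisfying the relations of type
`B_{n+1}`. -/
def lift (hs : IsTypeB n s) : ArtinB (n + 1) →* G :=
  PresentedGroup.toGroup (f := fun i : Fin (n + 1) => s i) (by
    rintro r (⟨i, j, hij, hj, rfl⟩ | ⟨i, j, hi, hj, rfl⟩ | ⟨i, j, hij, rfl⟩) <;>
      simp only [map_mul, map_inv, FreeGroup.lift_apply_of, mul_inv_eq_one]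
    · rw [← hij, hs.braid i (by lia)]
    · rw [(by lia : (j : ℕ) = n), hs.four i (by lia)]
    · obtain hj | hj := Nat.lt_succ_iff_lt_or_eq.1 j.2
      · exact hs.commute i j hij hj
      · rw [hj]
        exact hs.commute_last i (by lia))

theorem lift_gen (hs : IsTypeB n s) (hi : i ≤ n) : lift hs (gen n i) = s i := by
  simp [lift, gen_of_le hi]

theorem closure_gen (n : ℕ) : Subgroup.closure (gen n '' Set.Iic n) = ⊤ := by
  rw [← PresentedGroup.closure_range_of]
  congr 1
  ext z
  constructor
  · rintro ⟨i, hi, rfl⟩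
    exact ⟨⟨i, Nat.lt_succ_of_le hi⟩, (gen_of_le hi).symm⟩
  · rintro ⟨i, rfl⟩
    exact ⟨i, Nat.le_of_lt_succ i.2, gen_of_le (Nat.le_of_lt_succ i.2)⟩

end ArtinB

section HalfTwist

open FreeGroup (of)

theorem mulAut_freeGroup_ext {α : Type*} {f g : MulAut (FreeGroup α)}
    (h : ∀ a, f (of a) = g (of a)) : f = g :=
  MulEquiv.toMonoidHom_injective (FreeGroup.ext_hom _ _ h)

variable {α : Type*} [DecidableEq α]

/-- The automorphism `a ↦ a⁻¹ b a`, `b ↦ a` of the free group: the action of an elementary braid on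
the fundamental group of the punctured disc. -/
def halfTwist (a b : α) : MulAut (FreeGroup α) :=
  MonoidHom.toMulEquiv
    (FreeGroup.lift fun c => if c = a then (of a)⁻¹ * of b * of a else if c = b then of a else of c)
    (FreeGroup.lift fun c => if c = a then of b else if c = b then of b * of a * (of b)⁻¹ else of c)
    (by
      ext c
      rcases eq_or_ne c a with rfl | ha <;> rcases eq_or_ne c b with rfl | hb <;>
        simp_all [mul_assoc])
    (by
      ext c
      rcases eq_or_ne c a with rfl | ha <;> rcases eq_or_ne c b with rfl | hb <;>
        simp_all [mul_assoc])

theorem halfTwist_of (a b c : α) : halfTwist a b (of c) =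
    if c = a then (of a)⁻¹ * of b * of a else if c = b then of a else of c := by
  simp [halfTwist]

theorem halfTwist_of_left (a b : α) : halfTwist a b (of a) = (of a)⁻¹ * of b * of a := by
  simp [halfTwist_of]

theorem halfTwist_of_right (a b : α) : halfTwist a b (of b) = of a := by
  rcases eq_or_ne b a with rfl | h <;> simp [halfTwist_of, *]

theorem halfTwist_of_of_ne {a b c : α} (ha : c ≠ a) (hb : c ≠ b) : halfTwist a b (of c) = of c := by
  simp [halfTwist_of, ha, hb]

theorem halfTwist_braid {a b c : α} (hab : a ≠ b) (hbc : b ≠ c) (hac : a ≠ c) :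
    halfTwist a b * halfTwist b c * halfTwist a b =
      halfTwist b c * halfTwist a b * halfTwist b c := by
  refine mulAut_freeGroup_ext fun d => ?_
  simp only [MulAut.mul_apply]
  rcases eq_or_ne d a with rfl | ha
  · simp [halfTwist_of_left, halfTwist_of_of_ne hab hac, halfTwist_of_of_ne hac.symm hbc.symm,
      halfTwist_of_right, mul_assoc]
  rcases eq_or_ne d b with rfl | hb
  · simp [halfTwist_of_left, halfTwist_of_of_ne hab hac, halfTwist_of_of_ne hac.symm hbc.symm,
      halfTwist_of_right]
  rcases eq_or_ne d c with rfl | hc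
  · simp [halfTwist_of_of_ne hab hac, halfTwist_of_of_ne ha hb, halfTwist_of_right]
  · simp [halfTwist_of_of_ne ha hb, halfTwist_of_of_ne hb hc]

theorem commute_halfTwist {a b c d : α} (hac : a ≠ c) (had : a ≠ d) (hbc : b ≠ c) (hbd : b ≠ d) :
    Commute (halfTwist a b) (halfTwist c d) := by
  refine mulAut_freeGroup_ext fun e => ?_
  simp only [MulAut.mul_apply]
  by_cases he : e = a ∨ e = b
  · obtain ⟨hec, hed⟩ : e ≠ c ∧ e ≠ d := by rcases he with rfl | rfl <;> exact ⟨‹_›, ‹_›⟩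
    rw [halfTwist_of_of_ne hec hed]
    rcases he with rfl | rfl
    · simp [halfTwist_of_left, halfTwist_of_of_ne hac had, halfTwist_of_of_ne hbc hbd]
    · simp [halfTwist_of_right, halfTwist_of_of_ne hac had]
  obtain ⟨hea, heb⟩ := not_or.1 he
  rw [halfTwist_of_of_ne hea heb]
  rcases eq_or_ne e c with rfl | hec
  · simp [halfTwist_of_left, halfTwist_of_of_ne hea heb, halfTwist_of_of_ne had.symm hbd.symm]
  rcases eq_or_ne e d with rfl | hed
  · simp [halfTwist_of_right, halfTwist_of_of_ne hac.symm hbc.symm]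
  · simp [halfTwist_of_of_ne hec hed, halfTwist_of_of_ne hea heb]

theorem isTypeA_halfTwist {n : ℕ} {e : ℕ → α} (he : Set.InjOn e (Set.Iic n)) :
    IsTypeA n fun j => halfTwist (e j) (e (j + 1)) where
  braid i hi := by
    have hne {k l : ℕ} (hk : k ≤ n) (hl : l ≤ n) (hkl : k ≠ l) : e k ≠ e l := he.ne hk hl hkl
    exact halfTwist_braid (hne (by lia) (by lia) (by lia)) (hne (by lia) (by lia) (by lia))
      (hne (by lia) (by lia) (by lia))
  commute i j hij hj := by
    have hne {k l : ℕ} (hk : k ≤ n) (hl : l ≤ n) (hkl : k ≠ l) : e k ≠ e l := he.ne hk hl hkl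
    exact commute_halfTwist (hne (by lia) (by lia) (by lia)) (hne (by lia) (by lia) (by lia))
      (hne (by lia) (by lia) (by lia)) (hne (by lia) (by lia) (by lia))

end HalfTwist

section AffineAction

open FreeGroup (of)

theorem toPerm_mul_mulLeft {G : Type*} [Group G] (f : MulAut G) (g : G) :
    MulAut.toPerm G f * Equiv.mulLeft g = Equiv.mulLeft (f g) * MulAut.toPerm G f :=
  Equiv.ext fun h => map_mul f g h

variable {α : Type*} [DecidableEq α] {n i j : ℕ} {e : ℕ → α}

/-- The affine permutations of the free group through which the generators of type `B_{n+1}` act: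
half twists and, for the last one, the left translation by a free generator. The letters are
enumerated by `e`. -/
def affinePerm (n : ℕ) (e : ℕ → α) : ℕ → Equiv.Perm (FreeGroup α) :=
  Function.update (fun j => MulAut.toPerm _ (halfTwist (e j) (e (j + 1)))) n
    (Equiv.mulLeft (of (e n)))

theorem affinePerm_of_lt (hj : j < n) :
    affinePerm n e j = MulAut.toPerm _ (halfTwist (e j) (e (j + 1))) :=
  Function.update_of_ne hj.ne _ _

theorem affinePerm_last : affinePerm n e n = Equiv.mulLeft (of (e n)) :=
  Function.update_self _ _ _

theorem isTypeB_affinePerm (he : Set.InjOn e (Set.Iic n)) : IsTypeB n (affinePerm n e) := by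
  refine ((isTypeA_halfTwist he).map (MulAut.toPerm _)).isTypeB_update (fun i hi => ?_)
    fun i hi => ?_
  · subst hi
    have hright := toPerm_mul_mulLeft (halfTwist (e i) (e (i + 1))) (of (e (i + 1)))
    have hleft := toPerm_mul_mulLeft (halfTwist (e i) (e (i + 1))) (of (e i))
    rw [halfTwist_of_right] at hright
    rw [halfTwist_of_left, Equiv.mulLeft_mul, Equiv.mulLeft_mul, ← Equiv.inv_mulLeft] at hleft
    generalize MulAut.toPerm _ (halfTwist (e i) (e (i + 1))) = t at hright hleft ⊢
    generalize Equiv.mulLeft (of (e i)) = a at hright hleft ⊢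
    generalize Equiv.mulLeft (of (e (i + 1))) = b at hright hleft ⊢
    calc t * b * t * b = t * b * (t * b) := mul_assoc _ _ _
      _ = a * (t * a) * t := by simp only [hright, mul_assoc]
      _ = b * (a * t) * t := by rw [hleft]; group
      _ = b * t * b * t := by rw [← hright, ← mul_assoc]
  · have hfix : halfTwist (e i) (e (i + 1)) (of (e n)) = of (e n) :=
      halfTwist_of_of_ne (he.ne (Set.mem_Iic.2 le_rfl) (Set.mem_Iic.2 (by lia)) (by lia))
        (he.ne (Set.mem_Iic.2 le_rfl) (Set.mem_Iic.2 (by lia)) (by lia))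
    have hcomm := toPerm_mul_mulLeft (halfTwist (e i) (e (i + 1))) (of (e n))
    rwa [hfix] at hcomm

theorem loop_affinePerm (hi : i ≤ n) :
    loop n (affinePerm n e) i = Equiv.mulLeft (of (e i)) := by
  induction hi using Nat.decreasingInduction with
  | self => rw [loop_self, affinePerm_last]
  | of_succ i hi ih =>
    rw [loop_eq_conj hi, ih, affinePerm_of_lt hi, toPerm_mul_mulLeft, halfTwist_of_right,
      mul_inv_cancel_right]

end AffineAction

theorem injOn_finOfNat (n : ℕ) : Set.InjOn (Fin.ofNat (n + 1)) (Set.Iic n) := by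
  intro i hi j hj h
  simpa [Nat.mod_eq_of_lt (Nat.lt_succ_of_le hi), Nat.mod_eq_of_lt (Nat.lt_succ_of_le hj)]
    using congrArg Fin.val h

namespace ArtinB

open FreeGroup (of)

variable {n i j : ℕ}

/-- The projection `A[B_{n+1}] → A[A_n]` forgetting the axis, which kills the last generator. -/
def toArtinA (n : ℕ) : ArtinB (n + 1) →* ArtinA n :=
  lift ((ArtinA.isTypeA_σ n).isTypeB_update (g := 1) (by simp) (by simp))

theorem toArtinA_gen_of_lt (hj : j < n) : toArtinA n (gen n j) = ArtinA.σ n j := by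
  rw [toArtinA, lift_gen _ hj.le, Function.update_of_ne hj.ne]

theorem toArtinA_gen_last : toArtinA n (gen n n) = 1 := by
  rw [toArtinA, lift_gen _ le_rfl, Function.update_self]

/-- The section of `ArtinB.toArtinA` given by the standard generators. -/
def ofArtinA (n : ℕ) : ArtinA n →* ArtinB (n + 1) := ArtinA.lift (isTypeB_gen n).toIsTypeA

theorem ofArtinA_σ (hj : j < n) : ofArtinA n (ArtinA.σ n j) = gen n j := ArtinA.lift_σ _ hj

theorem toArtinA_ofArtinA (z : ArtinA n) : toArtinA n (ofArtinA n z) = z := by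
  suffices h : (toArtinA n).comp (ofArtinA n) = MonoidHom.id _ from DFunLike.congr_fun h z
  refine MonoidHom.eq_of_eqOn_dense (ArtinA.closure_σ n) ?_
  rintro _ ⟨j, hj, rfl⟩
  simp [ofArtinA_σ hj, toArtinA_gen_of_lt hj]

/-- The action of `A[B_{n+1}]` on the free group of rank `n + 1` by affine permutations. -/
def affineAction (n : ℕ) : ArtinB (n + 1) →* Equiv.Perm (FreeGroup (Fin (n + 1))) :=
  lift (isTypeB_affinePerm (injOn_finOfNat n))

/-- The morphism from the free group of rank `n + 1` to `A[B_{n+1}]` whose image consists of the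
products of loops around the axis. -/
def ofFreeGroup (n : ℕ) : FreeGroup (Fin (n + 1)) →* ArtinB (n + 1) :=
  FreeGroup.lift fun i => loop n (gen n) i

theorem ofFreeGroup_of (hi : i ≤ n) :
    ofFreeGroup n (of (Fin.ofNat (n + 1) i)) = loop n (gen n) i := by
  simp [ofFreeGroup, Nat.mod_eq_of_lt (Nat.lt_succ_of_le hi)]

theorem affineAction_ofFreeGroup (w : FreeGroup (Fin (n + 1))) :
    affineAction n (ofFreeGroup n w) = Equiv.mulLeft w := by
  suffices h : (affineAction n).comp (ofFreeGroup n) = MulAction.toPermHom _ _ from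
    DFunLike.congr_fun h w
  ext1 i
  have hi : (i : ℕ) ≤ n := Nat.le_of_lt_succ i.2
  have hloop : loop n (fun k => affineAction n (gen n k)) i =
      loop n (affinePerm n (Fin.ofNat (n + 1))) i := loop_congr fun k hk => lift_gen _ hk
  rw [MonoidHom.comp_apply, ← Fin.ofNat_val_eq_self i, ofFreeGroup_of hi, map_loop, hloop,
    loop_affinePerm hi]
  rfl

theorem ofFreeGroup_injective (n : ℕ) : Function.Injective (ofFreeGroup n) := fun v w h => by
  simpa [affineAction_ofFreeGroup] using DFunLike.congr_fun (congrArg (affineAction n) h) 1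

theorem ofFreeGroup_comp_halfTwist (hj : j < n) :
    (ofFreeGroup n).comp (halfTwist (Fin.ofNat (n + 1) j) (Fin.ofNat (n + 1) (j + 1)) : _ →* _) =
      (MulAut.conj (gen n j) : _ →* _).comp (ofFreeGroup n) := by
  ext i
  obtain ⟨i, hi, rfl⟩ : ∃ k ≤ n, Fin.ofNat (n + 1) k = i :=
    ⟨i, Nat.le_of_lt_succ i.2, Fin.ofNat_val_eq_self i⟩
  simp only [MonoidHom.comp_apply, MonoidHom.coe_coe,
    MulAut.conj_apply, ofFreeGroup_of hi]
  rcases eq_or_ne i j with rfl | hij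
  · simp only [halfTwist_of_left, map_mul, map_inv, ofFreeGroup_of hi, ofFreeGroup_of hj]
    rw [(isTypeB_gen n).mul_loop hj, mul_inv_cancel_right]
  rcases eq_or_ne i (j + 1) with rfl | hij'
  · rw [halfTwist_of_right, ofFreeGroup_of hj.le, mul_loop_succ hj, mul_inv_cancel_right]
  · rw [halfTwist_of_of_ne ((injOn_finOfNat n).ne hi hj.le hij) ((injOn_finOfNat n).ne hi hj hij'),
      ofFreeGroup_of hi, ((isTypeB_gen n).commute_loop hi hj hij hij').eq, mul_inv_cancel_right]

theorem gen_last_mem_range_ofFreeGroup (n : ℕ) : gen n n ∈ (ofFreeGroup n).range :=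
  ⟨_, (ofFreeGroup_of le_rfl).trans (loop_self _ _)⟩

theorem normal_range_ofFreeGroup (n : ℕ) : (ofFreeGroup n).range.Normal := by
  rw [← Subgroup.normalizer_eq_top_iff, eq_top_iff, ← closure_gen n, Subgroup.closure_le]
  rintro _ ⟨j, hj, rfl⟩
  obtain hj | rfl := lt_or_eq_of_le (Set.mem_Iic.1 hj)
  · refine Subgroup.mem_normalizer_iff_map_conj_eq.2 ?_
    rw [MonoidHom.map_range, ← ofFreeGroup_comp_halfTwist hj, MonoidHom.range_comp,
      MonoidHom.range_eq_top.2 (MulEquiv.surjective _), ← MonoidHom.range_eq_map]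
  · exact Subgroup.le_normalizer (gen_last_mem_range_ofFreeGroup j)

theorem ker_toArtinA_le (n : ℕ) : (toArtinA n).ker ≤ (ofFreeGroup n).range := by
  have := normal_range_ofFreeGroup n
  have hretract : (QuotientGroup.mk' (ofFreeGroup n).range).comp ((ofArtinA n).comp (toArtinA n)) =
      QuotientGroup.mk' (ofFreeGroup n).range := by
    refine MonoidHom.eq_of_eqOn_dense (closure_gen n) ?_
    rintro _ ⟨j, hj, rfl⟩
    obtain hj | rfl := lt_or_eq_of_le (Set.mem_Iic.1 hj)
    · simp only [MonoidHom.comp_apply, toArtinA_gen_of_lt hj, ofArtinA_σ hj]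
    · rw [MonoidHom.comp_apply, MonoidHom.comp_apply, toArtinA_gen_last, map_one, map_one, eq_comm,
        QuotientGroup.mk'_apply, QuotientGroup.eq_one_iff]
      exact gen_last_mem_range_ofFreeGroup j
  intro z hz
  rw [← QuotientGroup.eq_one_iff, ← QuotientGroup.mk'_apply, ← hretract, MonoidHom.comp_apply,
    MonoidHom.comp_apply, MonoidHom.mem_ker.1 hz, map_one, map_one]

theorem disjoint_ker_toArtinA_center (hn : 1 ≤ n) :
    Disjoint (toArtinA n).ker (Subgroup.center (ArtinB (n + 1))) := by
  refine Subgroup.disjoint_def.2 fun {z} hker hz => ?_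
  obtain ⟨w, rfl⟩ := ker_toArtinA_le n hker
  have hcomm (v : FreeGroup (Fin (n + 1))) : Commute w v :=
    ofFreeGroup_injective n (by rw [map_mul, map_mul, Subgroup.mem_center_iff.1 hz])
  have hne : (0 : Fin (n + 1)) ≠ Fin.last n := Fin.ne_of_val_ne (Nat.ne_of_lt hn)
  rw [eq_one_of_commute_of_of hne (hcomm _) (hcomm _), map_one]

end ArtinB

theorem CenterDetectedByInt.artinB_succ {n : ℕ} (hn : 1 ≤ n)
    (h : CenterDetectedByInt (ArtinA n)) : CenterDetectedByInt (ArtinB (n + 1)) :=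
  h.of_surjective (fun z => ⟨_, ArtinB.toArtinA_ofArtinA z⟩)
    (ArtinB.disjoint_ker_toArtinA_center hn)

section StrandAction

variable {G : Type*} [Group G] {n i j k : ℕ} {s : ℕ → G} (h : G)

/-- The translation part of `strandPerm`: when the strands at positions `j` and `j + 1` are
exchanged, the strand at position `i` being taken as the axis, the other strands trace the braid
`strandCocycle n s j i` of type `B_{n+1}`. There are `n + 2` positions; those from `n + 2` on are
fixed. -/
def strandCocycle (n : ℕ) (s : ℕ → G) (j i : ℕ) : G :=
  if n + 1 < i then 1
  else if i < j then s (j - 1)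
  else if i = j then loop n s j
  else if i = j + 1 then 1
  else s j

/-- The permutation by which the elementary braid exchanging the strands `j` and `j + 1` acts on the
pairs of a position of the axis and an element of `G`, for a sequence `s` of type `B_{n+1}`. -/
def strandPerm (n : ℕ) (s : ℕ → G) (j : ℕ) : Equiv.Perm (ℕ × G) :=
  (Equiv.swap j (j + 1)).prodShear fun i => Equiv.mulLeft (strandCocycle n s j i)

theorem strandPerm_apply (n : ℕ) (s : ℕ → G) (j i : ℕ) :
    strandPerm n s j (i, h) = (Equiv.swap j (j + 1) i, strandCocycle n s j i * h) :=
  rfl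

theorem strandPerm_self (hj : j ≤ n) : strandPerm n s j (j, h) = (j + 1, loop n s j * h) := by
  simp [strandPerm_apply, strandCocycle, hj.trans n.le_succ]

theorem strandPerm_succ (n : ℕ) (s : ℕ → G) (j : ℕ) : strandPerm n s j (j + 1, h) = (j, h) := by
  simp [strandPerm_apply, strandCocycle]

theorem strandPerm_of_lt (hj : j ≤ n) (hi : i < j) :
    strandPerm n s j (i, h) = (i, s (j - 1) * h) := by
  rw [strandPerm_apply, Equiv.swap_apply_of_ne_of_ne (by lia) (by lia), strandCocycle,
    if_neg (by lia), if_pos hi]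

theorem strandPerm_of_gt (hi : i ≤ n + 1) (hj : j + 1 < i) :
    strandPerm n s j (i, h) = (i, s j * h) := by
  rw [strandPerm_apply, Equiv.swap_apply_of_ne_of_ne (by lia) (by lia), strandCocycle,
    if_neg (by lia), if_neg (by lia), if_neg (by lia), if_neg (by lia)]

theorem strandPerm_of_lt_right (hj : j ≤ n) (hi : n + 1 < i) :
    strandPerm n s j (i, h) = (i, h) := by
  rw [strandPerm_apply, Equiv.swap_apply_of_ne_of_ne (by lia) (by lia), strandCocycle, if_pos hi,
    one_mul]

namespace IsTypeB

theorem strandPerm_braid (hs : IsTypeB n s) (hj : j < n) :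
    strandPerm n s j * strandPerm n s (j + 1) * strandPerm n s j =
      strandPerm n s (j + 1) * strandPerm n s j * strandPerm n s (j + 1) := by
  refine Equiv.ext fun ⟨i, h⟩ => ?_
  simp only [Equiv.Perm.mul_apply]
  obtain hi | rfl | rfl | rfl | hi | hi :
    i < j ∨ i = j ∨ i = j + 1 ∨ i = j + 1 + 1 ∨ (j + 1 + 1 < i ∧ i ≤ n + 1) ∨ n + 1 < i := by lia
  · obtain ⟨j, rfl⟩ : ∃ k, j = k + 1 := ⟨j - 1, by lia⟩
    simp only [strandPerm_of_lt _ hj.le hi,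
      strandPerm_of_lt (j := j + 1 + 1) _ hj (hi.trans (j + 1).lt_succ_self), Nat.add_sub_cancel,
      ← mul_assoc, hs.braid j hj]
  · simp only [strandPerm_self _ hj.le, strandPerm_self _ hj,
      strandPerm_of_gt (n := n) _ (by lia) (by lia : i + 1 < i + 1 + 1),
      strandPerm_of_lt (j := i + 1) _ hj i.lt_succ_self, Nat.add_sub_cancel, Prod.mk.injEq,
      true_and]
    simpa only [mul_assoc] using congrArg (· * h) (hs.commute_loop_succ_mul_loop hj).eq
  · simp only [strandPerm_self _ hj.le, strandPerm_succ, strandPerm_self _ hj,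
      strandPerm_of_gt (n := n) _ (by lia) (by lia : j + 1 < j + 1 + 1),
      strandPerm_of_lt (j := j + 1) _ hj j.lt_succ_self, Nat.add_sub_cancel, ← mul_assoc,
      mul_loop_succ hj]
  · simp only [strandPerm_succ, strandPerm_of_lt (j := j + 1) _ hj j.lt_succ_self,
      strandPerm_of_gt (n := n) _ (by lia) (by lia : j + 1 < j + 1 + 1), Nat.add_sub_cancel]
  · simp only [strandPerm_of_gt (j := j) _ hi.2 (by lia), strandPerm_of_gt _ hi.2 hi.1,
      ← mul_assoc, hs.braid j (by lia)]
  · simp only [strandPerm_of_lt_right _ hj.le hi, strandPerm_of_lt_right _ hj hi]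

theorem commute_strandPerm (hs : IsTypeB n s) (hjk : j + 2 ≤ k) (hk : k ≤ n) :
    Commute (strandPerm n s j) (strandPerm n s k) := by
  refine Equiv.ext fun ⟨i, h⟩ => ?_
  simp only [Equiv.Perm.mul_apply]
  obtain hi | rfl | rfl | hi | rfl | rfl | hi | hi :
    i < j ∨ i = j ∨ i = j + 1 ∨ (j + 1 < i ∧ i < k) ∨ i = k ∨ i = k + 1 ∨
      (k + 1 < i ∧ i ≤ n + 1) ∨ n + 1 < i := by lia
  · have hcomm : Commute (s (j - 1)) (s (k - 1)) := hs.commute _ _ (by lia) (by lia)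
    simp only [strandPerm_of_lt (n := n) _ (by lia) hi, strandPerm_of_lt (i := i) _ hk (by lia),
      ← mul_assoc, hcomm.eq]
  · have hcomm : Commute (s (k - 1)) (loop n s i) := hs.commute_loop_of_gt (by lia) (by lia)
    simp only [strandPerm_self (n := n) (j := i) _ (by lia),
      strandPerm_of_lt (i := i) _ hk (by lia), strandPerm_of_lt _ hk hjk, ← mul_assoc, hcomm.eq]
  · simp only [strandPerm_succ, strandPerm_of_lt (i := j) _ hk (by lia), strandPerm_of_lt _ hk hjk]
  · have hcomm : Commute (s j) (s (k - 1)) := hs.commute _ _ (by lia) (by lia)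
    simp only [strandPerm_of_gt (n := n) _ (by lia) hi.1, strandPerm_of_lt _ hk hi.2,
      ← mul_assoc, hcomm.eq]
  · have hcomm : Commute (s j) (loop n s i) := hs.commute_loop_of_lt hjk hk
    simp only [strandPerm_self _ hk, strandPerm_of_gt (n := n) _ (by lia) hjk,
      strandPerm_of_gt (n := n) (i := i + 1) (j := j) _ (by lia) (by lia), ← mul_assoc, hcomm.eq]
  · simp only [strandPerm_succ, strandPerm_of_gt (n := n) _ (by lia) hjk,
      strandPerm_of_gt (n := n) (i := k + 1) (j := j) _ (by lia) (by lia)]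
  · have hcomm : Commute (s j) (s k) := hs.commute _ _ hjk (by lia)
    simp only [strandPerm_of_gt (j := j) _ hi.2 (by lia), strandPerm_of_gt _ hi.2 hi.1,
      ← mul_assoc, hcomm.eq]
  · simp only [strandPerm_of_lt_right (j := j) _ (by lia) hi, strandPerm_of_lt_right _ hk hi]

theorem isTypeA_strandPerm (hs : IsTypeB n s) : IsTypeA (n + 1) (strandPerm n s) where
  braid j hj := hs.strandPerm_braid (by lia)
  commute j k hjk hk := hs.commute_strandPerm hjk (by lia)

end IsTypeB

end StrandAction

namespace ArtinB

variable {n i j : ℕ}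

/-- The embedding `A[B_{n+1}] → A[A_{n+1}]`, with the last strand as the axis. -/
def toArtinASucc (n : ℕ) : ArtinB (n + 1) →* ArtinA (n + 1) :=
  lift (ArtinA.isTypeA_σ (n + 1)).isTypeB_update_sq

theorem toArtinASucc_gen_of_lt (hj : j < n) :
    toArtinASucc n (gen n j) = ArtinA.σ (n + 1) j := by
  rw [toArtinASucc, lift_gen _ hj.le, Function.update_of_ne hj.ne]

theorem toArtinASucc_gen_last : toArtinASucc n (gen n n) = ArtinA.σ (n + 1) n ^ 2 := by
  rw [toArtinASucc, lift_gen _ le_rfl, Function.update_self]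

/-- The action of the braid group on `n + 2` strands obtained from the left translations of
`A[B_{n+1}]`, the stabilizer of the last strand. -/
def strandAction (n : ℕ) : ArtinA (n + 1) →* Equiv.Perm (ℕ × ArtinB (n + 1)) :=
  ArtinA.lift (isTypeB_gen n).isTypeA_strandPerm

theorem strandAction_σ (hj : j ≤ n) :
    strandAction n (ArtinA.σ (n + 1) j) = strandPerm n (gen n) j :=
  ArtinA.lift_σ _ (Nat.lt_succ_of_le hj)

theorem strandAction_toArtinASucc_last (u h : ArtinB (n + 1)) :
    strandAction n (toArtinASucc n u) (n + 1, h) = (n + 1, u * h) := by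
  have hu : u ∈ Subgroup.closure (gen n '' Set.Iic n) := by simp [closure_gen]
  induction hu using Subgroup.closure_induction generalizing h with
  | mem _ hx =>
    obtain ⟨j, hj, rfl⟩ := hx
    obtain hj | rfl := lt_or_eq_of_le (Set.mem_Iic.1 hj)
    · rw [toArtinASucc_gen_of_lt hj, strandAction_σ hj.le, strandPerm_of_gt _ le_rfl (by lia)]
    · rw [toArtinASucc_gen_last, map_pow, strandAction_σ le_rfl, pow_two, Equiv.Perm.mul_apply,
        strandPerm_succ, strandPerm_self _ le_rfl, loop_self]
  | one => simp
  | mul u v _ _ hu hv => rw [map_mul, map_mul, Equiv.Perm.mul_apply, hv, hu, mul_assoc]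
  | inv u _ hu => rw [map_inv, map_inv, Equiv.Perm.inv_eq_iff_eq, hu, mul_inv_cancel_left]

theorem toArtinASucc_injective (n : ℕ) : Function.Injective (toArtinASucc n) := by
  intro u v huv
  have h := congrArg (strandAction n · (n + 1, 1)) huv
  simpa [strandAction_toArtinASucc_last] using h

end ArtinB

section Swap

open Equiv (swap)

variable {α : Type*} [DecidableEq α]

theorem isTypeA_swap {n : ℕ} {e : ℕ → α} (he : Set.InjOn e (Set.Iic n)) :
    IsTypeA n fun j => swap (e j) (e (j + 1)) where
  braid i hi := by
    have hne {k l : ℕ} (hk : k ≤ n) (hl : l ≤ n) (hkl : k ≠ l) : e k ≠ e l := he.ne hk hl hkl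
    have hab : e i ≠ e (i + 1) := hne (by lia) (by lia) (by lia)
    have hbc : e (i + 1) ≠ e (i + 1 + 1) := hne (by lia) (by lia) (by lia)
    have hac : e i ≠ e (i + 1 + 1) := hne (by lia) (by lia) (by lia)
    have h := Equiv.swap_mul_swap_mul_swap hab hac
    have h' := Equiv.swap_mul_swap_mul_swap hbc.symm hac.symm
    rw [Equiv.swap_comm (e (i + 1)) (e i), Equiv.swap_comm (e (i + 1 + 1)) (e (i + 1))] at h'
    rw [h, h', Equiv.swap_comm]
  commute i j hij hj := by
    have hne {k l : ℕ} (hk : k ≤ n) (hl : l ≤ n) (hkl : k ≠ l) : e k ≠ e l := he.ne hk hl hkl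
    refine Equiv.Perm.Disjoint.commute fun x => ?_
    by_cases hx : x = e i ∨ x = e (i + 1)
    · refine Or.inr ?_
      rcases hx with rfl | rfl <;>
        exact Equiv.swap_apply_of_ne_of_ne (hne (by lia) (by lia) (by lia))
          (hne (by lia) (by lia) (by lia))
    · exact Or.inl (Equiv.swap_apply_of_ne_of_ne (fun h => hx (Or.inl h)) fun h => hx (Or.inr h))

theorem apply_eq_self_of_commute_swap {π : Equiv.Perm α} {a b c : α} (hac : a ≠ c) (hbc : b ≠ c)
    (hab : a ≠ b) (h : Commute π (swap a b)) (h' : Commute π (swap b c)) : π c = c := by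
  have hfix : swap a b (π c) = π c := by
    rw [← Equiv.Perm.mul_apply, ← h.eq, Equiv.Perm.mul_apply,
      Equiv.swap_apply_of_ne_of_ne hac.symm hbc.symm]
  have hmove : swap b c (π c) ≠ π c := by
    rw [← Equiv.Perm.mul_apply, ← h'.eq, Equiv.Perm.mul_apply, Equiv.swap_apply_right]
    exact π.injective.ne hbc
  have hb : π c ≠ b := fun hb => Equiv.swap_apply_ne_self_iff.2 ⟨hab, Or.inr hb⟩ hfix
  exact (Equiv.swap_apply_ne_self_iff.1 hmove).2.resolve_left hb

end Swap

namespace ArtinA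

variable {n i j : ℕ}

/-- The permutation of the strands underlying a braid on `n + 1` strands. -/
def toPerm (n : ℕ) : ArtinA n →* Equiv.Perm (Fin (n + 1)) :=
  lift (isTypeA_swap (injOn_finOfNat n))

theorem toPerm_σ (hj : j < n) :
    toPerm n (σ n j) = Equiv.swap (Fin.ofNat (n + 1) j) (Fin.ofNat (n + 1) (j + 1)) :=
  lift_σ _ hj

theorem val_toPerm_σ (hj : j < n) (i : Fin (n + 1)) :
    (toPerm n (σ n j) i : ℕ) = Equiv.swap j (j + 1) i := by
  rw [toPerm_σ hj, ← Fin.val_injective.swap_apply, Fin.val_ofNat, Fin.val_ofNat,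
    Nat.mod_eq_of_lt (by lia), Nat.mod_eq_of_lt (by lia)]

theorem toPerm_last_of_mem_center (hn : 2 ≤ n) {z : ArtinA n} (hz : z ∈ Subgroup.center _) :
    toPerm n z (Fin.last n) = Fin.last n := by
  have hcomm (j : ℕ) (hj : j < n) : Commute (toPerm n z)
      (Equiv.swap (Fin.ofNat (n + 1) j) (Fin.ofNat (n + 1) (j + 1))) := by
    have hσ : Commute z (σ n j) := (Subgroup.mem_center_iff.1 hz _).symm
    rw [← toPerm_σ hj]
    exact hσ.map _
  have hne {k l : ℕ} (hk : k ≤ n) (hl : l ≤ n) (hkl : k ≠ l) :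
      Fin.ofNat (n + 1) k ≠ Fin.ofNat (n + 1) l := (injOn_finOfNat n).ne hk hl hkl
  have hlast : Fin.ofNat (n + 1) n = Fin.last n := Fin.ext (Nat.mod_eq_of_lt n.lt_succ_self)
  obtain ⟨m, rfl⟩ : ∃ m, n = m + 1 + 1 := ⟨n - 2, by lia⟩
  rw [← hlast]
  exact apply_eq_self_of_commute_swap (hne (by lia) (by lia) (by lia))
    (hne (by lia) (by lia) (by lia)) (hne (by lia) (by lia) (by lia)) (hcomm m (by lia))
    (hcomm (m + 1) (by lia))

end ArtinA

namespace ArtinB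

variable {n i j : ℕ}

theorem σ_mem_range_toArtinASucc (hj : j < n) :
    ArtinA.σ (n + 1) j ∈ (toArtinASucc n).range :=
  ⟨gen n j, toArtinASucc_gen_of_lt hj⟩

theorem toArtinASucc_loop_gen (n i : ℕ) : toArtinASucc n (loop n (gen n) i) =
    loop n (Function.update (ArtinA.σ (n + 1)) n (ArtinA.σ (n + 1) n ^ 2)) i := by
  rw [map_loop]
  exact loop_congr fun k hk => lift_gen _ hk

/-- The coset of the braids whose permutation takes the last position to `i`. -/
def strandCoset (n i : ℕ) : ArtinA (n + 1) ⧸ (toArtinASucc n).range :=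
  (prodIco (ArtinA.σ (n + 1)) i (n + 1) : ArtinA (n + 1))

theorem σ_smul_strandCoset (hj : j ≤ n) (hi : i ≤ n + 1) :
    ArtinA.σ (n + 1) j • strandCoset n i = strandCoset n (Equiv.swap j (j + 1) i) := by
  have hσ := ArtinA.isTypeA_σ (n + 1)
  rw [strandCoset, strandCoset, MulAction.Quotient.smul_coe, smul_eq_mul]
  obtain h | rfl | rfl | h : i < j ∨ i = j ∨ i = j + 1 ∨ j + 1 < i := by lia
  · obtain ⟨j, rfl⟩ : ∃ k, j = k + 1 := ⟨j - 1, by lia⟩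
    rw [Equiv.swap_apply_of_ne_of_ne (by lia) (by lia),
      hσ.succ_mul_prodIco (by lia) (by lia) le_rfl,
      QuotientGroup.mk_mul_of_mem _ (σ_mem_range_toArtinASucc (by lia))]
  · rw [Equiv.swap_apply_left, ← hσ.prodIco_succ_mul_loop_update_sq hj,
      ← toArtinASucc_loop_gen, QuotientGroup.mk_mul_of_mem _ (MonoidHom.mem_range.2 ⟨_, rfl⟩)]
  · rw [Equiv.swap_apply_right, ← prodIco_eq_mul (by lia)]
  · rw [Equiv.swap_apply_of_ne_of_ne (by lia) (by lia),
      (hσ.commute_prodIco_of_lt h le_rfl).eq,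
      QuotientGroup.mk_mul_of_mem _ (σ_mem_range_toArtinASucc (by lia))]

theorem smul_strandCoset (z : ArtinA (n + 1)) (i : Fin (n + 2)) :
    z • strandCoset n i = strandCoset n (ArtinA.toPerm (n + 1) z i) := by
  have hz : z ∈ Subgroup.closure (ArtinA.σ (n + 1) '' Set.Iio (n + 1)) := by
    simp [ArtinA.closure_σ]
  induction hz using Subgroup.closure_induction generalizing i with
  | mem _ hx =>
    obtain ⟨j, hj, rfl⟩ := hx
    rw [ArtinA.val_toPerm_σ hj, σ_smul_strandCoset (Nat.le_of_lt_succ hj) i.is_le]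
  | one => simp
  | mul u v _ _ hu hv => rw [mul_smul, hv, hu, map_mul, Equiv.Perm.mul_apply]
  | inv u _ hu => rw [inv_smul_eq_iff, hu, map_inv, ← Equiv.Perm.mul_apply, mul_inv_cancel,
      Equiv.Perm.one_apply]

theorem strandCoset_last (n : ℕ) : strandCoset n (n + 1) = (1 : ArtinA (n + 1)) := by
  rw [strandCoset, prodIco_self]

theorem mk_eq_strandCoset (z : ArtinA (n + 1)) :
    (z : ArtinA (n + 1) ⧸ (toArtinASucc n).range) =
      strandCoset n (ArtinA.toPerm (n + 1) z (Fin.last (n + 1))) := by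
  rw [← smul_strandCoset, Fin.val_last, strandCoset_last, MulAction.Quotient.smul_coe, smul_eq_mul,
    mul_one]

theorem finiteIndex_range_toArtinASucc (n : ℕ) : (toArtinASucc n).range.FiniteIndex := by
  have hsurj : Function.Surjective fun i : Fin (n + 2) => strandCoset n i := by
    intro x
    obtain ⟨z, rfl⟩ := QuotientGroup.mk_surjective x
    exact ⟨_, (mk_eq_strandCoset z).symm⟩
  have := Finite.of_surjective _ hsurj
  exact Subgroup.finiteIndex_of_finite_quotient

theorem center_le_range_toArtinASucc (hn : 1 ≤ n) :
    Subgroup.center (ArtinA (n + 1)) ≤ (toArtinASucc n).range := by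
  intro z hz
  have hone : strandCoset n (Fin.last (n + 1)) = (1 : ArtinA (n + 1)) := strandCoset_last n
  rw [← inv_mem_iff, ← mul_one z⁻¹, ← QuotientGroup.eq, ← hone, mk_eq_strandCoset,
    ArtinA.toPerm_last_of_mem_center (Nat.succ_le_succ hn) hz]

end ArtinB

theorem CenterDetectedByInt.artinA_succ {n : ℕ} (hn : 1 ≤ n)
    (h : CenterDetectedByInt (ArtinB (n + 1))) : CenterDetectedByInt (ArtinA (n + 1)) := by
  have := ArtinB.finiteIndex_range_toArtinASucc n
  let e := MonoidHom.ofInjective (ArtinB.toArtinASucc_injective n)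
  have hrange : CenterDetectedByInt (ArtinB.toArtinASucc n).range := by
    refine h.of_surjective (f := e.symm.toMonoidHom) e.symm.surjective ?_
    rw [(MonoidHom.ker_eq_bot_iff _).2 e.symm.injective]
    exact disjoint_bot_left
  exact hrange.of_finiteIndex (ArtinB.center_le_range_toArtinASucc hn)

theorem centerDetectedByInt_artinA_one : CenterDetectedByInt (ArtinA 1) := by
  have hlift : IsTypeA 1 fun _ => Multiplicative.ofAdd (1 : ℤ) :=
    ⟨fun _ _ => rfl, fun _ _ _ _ => Commute.refl _⟩
  have hinv : (zpowersHom _ (ArtinA.σ 1 0)).comp (ArtinA.lift hlift) = MonoidHom.id _ := by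
    refine MonoidHom.eq_of_eqOn_dense (ArtinA.closure_σ 1) ?_
    rintro _ ⟨i, hi, rfl⟩
    obtain rfl := Nat.lt_one_iff.1 hi
    simp [ArtinA.lift_σ hlift hi]
  have hleft : Function.LeftInverse (zpowersHom _ (ArtinA.σ 1 0)) (ArtinA.lift hlift) :=
    DFunLike.congr_fun hinv
  exact .of_injective_int hleft.injective

theorem centerDetectedByInt_artinA {n : ℕ} (hn : 1 ≤ n) : CenterDetectedByInt (ArtinA n) := by
  induction n, hn using Nat.le_induction with
  | base => exact centerDetectedByInt_artinA_one
  | succ n hn ih => exact (ih.artinB_succ hn).artinA_succ hn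

theorem quotient_center_trivial_general (n : ℕ) (hn : 2 ≤ n) :
    Subgroup.center (AbarB n) = ⊥ := by
  obtain ⟨n, rfl⟩ : ∃ m, n = m + 1 := ⟨n - 1, by lia⟩
  have hn : 1 ≤ n := Nat.le_of_succ_le_succ hn
  exact ((centerDetectedByInt_artinA hn).artinB_succ hn).center_quotient_center_eq_bot

/-- the quotient `Ā = A[Bₙ]/Z(A[Bₙ])` has trivial center, `n ≥ 5`. -/
theorem quotient_center_trivial (n : ℕ) (hn : 5 ≤ n) :
    Subgroup.center (AbarB n) = ⊥ :=
  quotient_center_trivial_general n (by lia)
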